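/- arXiv:1211.3056 — 2 statements merged into one kernel-verified Lean document; each statement's English description precedes it below -/
import Mathlib

section
/- Two-length configurations: for every i ≥ 0 and every t with 0 ≤ t < k_{i+1}, setting n = q_i + q_{i−1,t}, the multiset of the n gap lengths of the configuration of n points consists of exactly q_i copies of θ_{i−1,t} and exactly q_{i−1,t} copies of θ_i. -/
/-- The configuration of `n` points `{a·x mod 1 : 0 ≤ x < n}` on the unit segment. -/
noncomputable def pts (a : ℝ) (n : ℕ) : Finset ℝ :=
  (Finset.range n).image fun x : ℕ => Int.fract (a * x)

/-- The length of the gap of the configuration of `n` points whose left endpoint is `s`. -/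
noncomputable def gapAt (a : ℝ) (n : ℕ) (s : ℝ) : ℝ :=
  sInf {d : ℝ | 0 < d ∧ (s + d = 1 ∨ s + d ∈ pts a n)}

/-- The multiset of the `n` gap lengths of the configuration of `n` points. -/
noncomputable def gaps (a : ℝ) (n : ℕ) : Multiset ℝ :=
  (pts a n).val.map (gapAt a n)

/-!
Let `p / r < a < p' / l` be Farey neighbours. Raising an index by `r` moves its point to the right
by `a r - p`, and lowering it by `l` moves the point to the right by `p' - a l`. As the pairs
`(r, p)` and `(l, p')` form a basis of `ℤ²`, the displacement between two of the `l + r` points is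
an integral combination of these two steps. An index difference is less than `l + r` in absolute
value, so a nonnegative displacement has nonnegative coefficients. Hence the gap to the right of
the point with index `x` is a single step: the first one if `x < l`, when `x + r` is still an index,
and the second one otherwise. The continued fraction algorithm supplies the Farey neighbours.
-/

theorem nonneg_of_combination_nonneg {R : Type*} [Ring R] [LinearOrder R] [IsStrictOrderedRing R]
    {α β : R} (hα : 0 < α) (hβ : 0 < β) {r l : ℕ} {u v : ℤ} (hsum : 0 ≤ u * α + v * β)
    (hlt : -(l + r : ℤ) < u * r - v * l) : 0 ≤ u := by
  by_contra! hu
  have hv : 0 < v := by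
    by_contra! hv
    have huα : (u : R) * α < 0 := mul_neg_of_neg_of_pos (mod_cast hu) hα
    have hvβ : (v : R) * β ≤ 0 := mul_nonpos_of_nonpos_of_nonneg (mod_cast hv) hβ.le
    exact (add_neg_of_neg_of_nonpos huα hvβ).not_ge hsum
  have hur : u * r ≤ -1 * r := by gcongr; omega
  have hvl : 1 * l ≤ v * l := by gcongr; omega
  linarith

/-- The fractions `p / r` and `p' / l` are Farey neighbours with `a` strictly between them.
Denominators are cleared, so that `r = 0` and `l = 0` stand for the infinite endpoints `-1 / 0`
and `1 / 0`. -/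
structure IsFareyBracket (a : ℝ) (p : ℤ) (r : ℕ) (p' : ℤ) (l : ℕ) : Prop where
  mul_sub_pos : 0 < a * r - p
  sub_mul_pos : 0 < p' - a * l
  det : p' * r - p * l = 1

/-- The length of the gap to the right of the point with index `x` in the configuration of `l + r`
points, where `p / r < a < p' / l` are Farey neighbours. -/
noncomputable def fareyGap (a : ℝ) (p : ℤ) (r : ℕ) (p' : ℤ) (l x : ℕ) : ℝ :=
  if x < l then a * r - p else p' - a * l

section Configuration

variable {a d : ℝ} {n x y : ℕ}

theorem mem_pts {s : ℝ} : s ∈ pts a n ↔ ∃ y < n, Int.fract (a * y) = s := by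
  simp [pts]

theorem exists_eq_mul_sub_sub_of_fract_add (hn : 0 < n)
    (hd : Int.fract (a * x) + d = 1 ∨ Int.fract (a * x) + d ∈ pts a n) :
    ∃ y < n, ∃ m : ℤ, d = a * (y - x) - m := by
  have hx := Int.self_sub_floor (a * x)
  rcases hd with hd | hd
  · refine ⟨0, hn, -⌊a * x⌋ - 1, ?_⟩
    push_cast
    linarith
  · obtain ⟨y, hy, hyd⟩ := mem_pts.mp hd
    refine ⟨y, hy, ⌊a * y⌋ - ⌊a * x⌋, ?_⟩
    push_cast
    linarith [Int.self_sub_floor (a * y)]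

theorem fract_add_eq_one_or_mem_pts (hy : y < n) {m : ℤ} (hd : d = a * (y - x) - m)
    (hd0 : 0 ≤ d) (hd1 : Int.fract (a * x) + d ≤ 1) :
    Int.fract (a * x) + d = 1 ∨ Int.fract (a * x) + d ∈ pts a n := by
  refine hd1.eq_or_lt.imp_right fun hlt => mem_pts.mpr ⟨y, hy, Int.fract_eq_iff.mpr ?_⟩
  refine ⟨add_nonneg (Int.fract_nonneg _) hd0, hlt, ⌊a * x⌋ + m, ?_⟩
  push_cast
  linarith [Int.self_sub_floor (a * x)]

theorem gaps_eq_map_range (hinj : Set.InjOn (fun x : ℕ => Int.fract (a * x)) (Finset.range n)) :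
    gaps a n = (Multiset.range n).map fun x : ℕ => gapAt a n (Int.fract (a * x)) := by
  rw [gaps, pts, Finset.image_val_of_injOn hinj, Multiset.map_map, Finset.range_val]
  rfl

end Configuration

namespace IsFareyBracket

variable {a : ℝ} {p p' : ℤ} {r l x y : ℕ}

theorem exists_int_combination (h : IsFareyBracket a p r p' l) (d m : ℤ) :
    ∃ u v : ℤ, u * r - v * l = d ∧ u * p - v * p' = m :=
  ⟨d * p' - m * l, d * p - m * r, by linear_combination d * h.det, by linear_combination m * h.det⟩

theorem exists_nat_combination (h : IsFareyBracket a p r p' l) {d m : ℤ} (hd : |d| < l + r)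
    (hdisp : 0 ≤ a * d - m) :
    ∃ u v : ℕ, (u * r - v * l : ℤ) = d ∧ a * d - m = u * (a * r - p) + v * (p' - a * l) := by
  obtain ⟨u, v, rfl, rfl⟩ := h.exists_int_combination d m
  have hsteps : a * ((u * r - v * l : ℤ) : ℝ) - ((u * p - v * p' : ℤ) : ℝ) =
      u * (a * r - p) + v * (p' - a * l) := by
    push_cast
    ring
  rw [hsteps] at hdisp ⊢
  obtain ⟨hlower, hupper⟩ := abs_lt.mp hd
  have hu : 0 ≤ u :=
    nonneg_of_combination_nonneg h.mul_sub_pos h.sub_mul_pos hdisp hlower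
  have hv : 0 ≤ v :=
    nonneg_of_combination_nonneg (r := l) (l := r) h.sub_mul_pos h.mul_sub_pos
      (by rwa [add_comm]) (by linarith)
  lift u to ℕ using hu
  lift v to ℕ using hv
  exact ⟨u, v, rfl, by simp⟩

theorem exists_index_combination (h : IsFareyBracket a p r p' l) (hx : x < l + r) (hy : y < l + r)
    {m : ℤ} (hdisp : 0 ≤ a * (y - x) - m) :
    ∃ u v : ℕ, x + u * r = y + v * l ∧
      a * (y - x) - m = u * (a * r - p) + v * (p' - a * l) := by
  obtain ⟨u, v, hindex, hsteps⟩ :=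
    h.exists_nat_combination (d := y - x) (m := m) (by rw [abs_lt]; omega) (mod_cast hdisp)
  exact ⟨u, v, by zify; linarith, mod_cast hsteps⟩

theorem injOn_fract (h : IsFareyBracket a p r p' l) :
    Set.InjOn (fun x : ℕ => Int.fract (a * x)) (Finset.range (l + r)) := by
  intro x hx y hy hxy
  obtain ⟨m, hm⟩ := Int.fract_eq_fract.mp hxy.symm
  have hzero : a * (y - x) - m = 0 := by linarith
  obtain ⟨u, v, hindex, hsteps⟩ :=
    h.exists_index_combination (Finset.mem_range.mp hx) (Finset.mem_range.mp hy) hzero.ge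
  rw [hzero, eq_comm, add_eq_zero_iff_of_nonneg (mul_nonneg u.cast_nonneg h.mul_sub_pos.le)
    (mul_nonneg v.cast_nonneg h.sub_mul_pos.le)] at hsteps
  have hu : u = 0 := by simpa [h.mul_sub_pos.ne'] using hsteps.1
  have hv : v = 0 := by simpa [h.sub_mul_pos.ne'] using hsteps.2
  simpa [hu, hv] using hindex

theorem fareyGap_pos (h : IsFareyBracket a p r p' l) : 0 < fareyGap a p r p' l x := by
  rw [fareyGap]
  split_ifs
  exacts [h.mul_sub_pos, h.sub_mul_pos]

theorem fareyGap_le (h : IsFareyBracket a p r p' l) (hx : x < l + r) (hy : y < l + r) {m : ℤ}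
    (hdisp : 0 < a * (y - x) - m) : fareyGap a p r p' l x ≤ a * (y - x) - m := by
  obtain ⟨u, v, hindex, hsteps⟩ := h.exists_index_combination hx hy hdisp.le
  have hleft := h.mul_sub_pos
  have hright := h.sub_mul_pos
  have huv : u ≠ 0 ∨ v ≠ 0 := by
    by_contra! huv
    simp [hsteps, huv] at hdisp
  rw [hsteps, fareyGap]
  split_ifs with hxl
  · have hu : u ≠ 0 := by
      rintro rfl
      have := Nat.le_mul_of_pos_left l (by omega : 0 < v)
      omega
    have : (1 : ℝ) ≤ u := mod_cast Nat.one_le_iff_ne_zero.mpr hu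
    nlinarith [mul_nonneg v.cast_nonneg hright.le]
  · have hv : v ≠ 0 := by
      rintro rfl
      have := Nat.le_mul_of_pos_left r (by omega : 0 < u)
      omega
    have : (1 : ℝ) ≤ v := mod_cast Nat.one_le_iff_ne_zero.mpr hv
    nlinarith [mul_nonneg u.cast_nonneg hleft.le]

theorem exists_fareyGap_eq (hx : x < l + r) :
    ∃ y < l + r, ∃ m : ℤ, fareyGap a p r p' l x = a * (y - x) - m := by
  rw [fareyGap]
  split_ifs with hxl
  · exact ⟨x + r, by omega, p, by push_cast; ring⟩
  · refine ⟨x - l, by omega, -p', ?_⟩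
    push_cast [Nat.cast_sub (not_lt.mp hxl)]
    ring

theorem gapAt_fract (h : IsFareyBracket a p r p' l) (hx : x < l + r) :
    gapAt a (l + r) (Int.fract (a * x)) = fareyGap a p r p' l x := by
  have hle {d : ℝ} (hd0 : 0 < d)
      (hd : Int.fract (a * x) + d = 1 ∨ Int.fract (a * x) + d ∈ pts a (l + r)) :
      fareyGap a p r p' l x ≤ d := by
    obtain ⟨y, hy, m, rfl⟩ := exists_eq_mul_sub_sub_of_fract_add (by omega) hd
    exact h.fareyGap_le hx hy hd0
  have hle_one : Int.fract (a * x) + fareyGap a p r p' l x ≤ 1 :=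
    le_sub_iff_add_le'.mp <|
      hle (sub_pos.mpr (Int.fract_lt_one _)) (.inl (add_sub_cancel _ _))
  obtain ⟨y, hy, m, hm⟩ := exists_fareyGap_eq hx
  exact IsLeast.csInf_eq
    ⟨⟨h.fareyGap_pos, fract_add_eq_one_or_mem_pts hy hm h.fareyGap_pos.le hle_one⟩,
      fun _ hd => hle hd.1 hd.2⟩

theorem map_fareyGap_range (a : ℝ) (p : ℤ) (r : ℕ) (p' : ℤ) (l : ℕ) :
    (Multiset.range (l + r)).map (fareyGap a p r p' l) =
      Multiset.replicate l (a * r - p) + Multiset.replicate r (p' - a * l) := by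
  rw [Multiset.range_add, Multiset.map_add, Multiset.map_map]
  congr 1
  · refine (Multiset.map_congr rfl fun x hx => if_pos (Multiset.mem_range.mp hx)).trans ?_
    simp
  · simp [fareyGap, Function.comp_def]

theorem gaps_eq (h : IsFareyBracket a p r p' l) :
    gaps a (l + r) =
      Multiset.replicate l (a * r - p) + Multiset.replicate r (p' - a * l) := by
  rw [gaps_eq_map_range h.injOn_fract, ← map_fareyGap_range]
  exact Multiset.map_congr rfl fun x hx => h.gapAt_fract (Multiset.mem_range.mp hx)

end IsFareyBracket

theorem gaps_eq_of_alternating_errors {a α β : ℝ} {p p' : ℤ} {r l m : ℕ} (hα : 0 < α) (hβ : 0 < β)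
    (hr : a * r - p = (-1) ^ m * β) (hl : a * l - p' = (-1) ^ (m + 1) * α)
    (hdet : p' * r - p * l = (-1) ^ m) :
    gaps a (r + l) = Multiset.replicate r α + Multiset.replicate l β := by
  rcases m.even_or_odd with hm | hm
  · simp only [hm.neg_one_pow, hm.add_one.neg_one_pow, one_mul, neg_one_mul] at hr hl hdet
    have hl' : p' - a * l = α := by linarith
    have h : IsFareyBracket a p r p' l := ⟨hr ▸ hβ, hl' ▸ hα, hdet⟩
    rw [add_comm r, h.gaps_eq, hr, hl', add_comm]
  · simp only [hm.neg_one_pow, hm.add_one.neg_one_pow, one_mul, neg_one_mul] at hr hl hdet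
    have hr' : p - a * r = β := by linarith
    have h : IsFareyBracket a p' l p r := ⟨hl ▸ hα, hr' ▸ hβ, by linarith⟩
    rw [h.gaps_eq, hl, hr']

/-- The numerators of the continued fraction with partial quotients `k 1, k 2, …`. The index is
shifted by one, so that `convergentNum k (m + 1)` is the mathematical `p_m`. -/
def convergentNum (k : ℕ → ℕ) : ℕ → ℤ
  | 0 => 1
  | 1 => 0
  | m + 2 => convergentNum k m + k (m + 1) * convergentNum k (m + 1)

theorem mul_sub_convergentNum {R : Type*} [CommRing R] {a : R} {θ : ℕ → R} {q k : ℕ → ℕ}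
    (hθ0 : θ 0 = 1) (hθ1 : θ 1 = a) (hq0 : q 0 = 0) (hq1 : q 1 = 1)
    (hθrec : ∀ i, θ (i + 2) = θ i - (k (i + 1) : R) * θ (i + 1))
    (hqrec : ∀ i, q (i + 2) = q i + k (i + 1) * q (i + 1)) (m : ℕ) :
    a * q m - convergentNum k m = (-1) ^ (m + 1) * θ m := by
  induction m using Nat.twoStepInduction with
  | zero => simp [convergentNum, hθ0, hq0]
  | one => simp [convergentNum, hθ1, hq1]
  | more m ih ih' =>
    rw [hθrec, hqrec, convergentNum]
    push_cast
    linear_combination ih + (k (m + 1) : R) * ih'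

theorem convergentNum_det {q k : ℕ → ℕ} (hq0 : q 0 = 0) (hq1 : q 1 = 1)
    (hqrec : ∀ i, q (i + 2) = q i + k (i + 1) * q (i + 1)) (m : ℕ) :
    convergentNum k m * q (m + 1) - convergentNum k (m + 1) * q m = (-1) ^ m := by
  induction m with
  | zero => simp [convergentNum, hq0, hq1]
  | succ m ih =>
    rw [hqrec, convergentNum]
    push_cast
    linear_combination -ih

section Remainder

variable {K : Type*} [Field K] [LinearOrder K] [IsStrictOrderedRing K] [FloorRing K]

theorem natCast_mul_le_of_eq_floor_div {x y : K} {k : ℕ} (hx : 0 ≤ x) (hy : 0 ≤ y)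
    (hk : (k : ℤ) = ⌊x / y⌋) : k * y ≤ x :=
  mul_le_of_le_div₀ hx hy (mod_cast Int.le_floor.mp hk.le)

theorem ne_zero_of_eq_floor_div {x y : K} {k : ℕ} (hk : (k : ℤ) = ⌊x / y⌋) (hk0 : k ≠ 0) :
    y ≠ 0 := by
  rintro rfl
  exact hk0 (by simpa using hk)

theorem remainder_nonneg {θ : ℕ → K} {k : ℕ → ℕ} (hθ0 : 0 ≤ θ 0) (hθ1 : 0 ≤ θ 1)
    (hk : ∀ i, (k (i + 1) : ℤ) = ⌊θ i / θ (i + 1)⌋)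
    (hθrec : ∀ i, θ (i + 2) = θ i - (k (i + 1) : K) * θ (i + 1)) (m : ℕ) : 0 ≤ θ m := by
  induction m using Nat.twoStepInduction with
  | zero => exact hθ0
  | one => exact hθ1
  | more m ih ih' =>
    rw [hθrec, sub_nonneg]
    exact natCast_mul_le_of_eq_floor_div ih ih' (hk m)

end Remainder

/-- For rational `a` the algorithm reaches a remainder `0`. As `⌊θ i / 0⌋ = 0`, all quotients from
then on vanish, which leaves no `t`. -/
theorem two_length_configurations_general (a : ℝ) (ha0 : 0 < a)
    (θ : ℕ → ℝ) (q k : ℕ → ℕ)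
    (hθ0 : θ 0 = 1) (hθ1 : θ 1 = a)
    (hq0 : q 0 = 0) (hq1 : q 1 = 1)
    (hk : ∀ i, (k (i + 1) : ℤ) = ⌊θ i / θ (i + 1)⌋)
    (hθrec : ∀ i, θ (i + 2) = θ i - (k (i + 1) : ℝ) * θ (i + 1))
    (hqrec : ∀ i, q (i + 2) = q i + k (i + 1) * q (i + 1))
    (i t : ℕ) (ht : t < k (i + 1)) :
    gaps a (q (i + 1) + (q i + t * q (i + 1))) =
      Multiset.replicate (q (i + 1)) (θ i - (t : ℝ) * θ (i + 1)) +
      Multiset.replicate (q i + t * q (i + 1)) (θ (i + 1)) := by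
  have hnonneg := remainder_nonneg (by simp [hθ0]) (by simp [hθ1, ha0.le]) hk hθrec
  have hθ : 0 < θ (i + 1) :=
    (hnonneg _).lt_of_ne' (ne_zero_of_eq_floor_div (hk i) (Nat.ne_zero_of_lt ht))
  have hθt : 0 < θ i - t * θ (i + 1) := sub_pos.mpr <| calc
    (t : ℝ) * θ (i + 1) < k (i + 1) * θ (i + 1) := by gcongr
    _ ≤ θ i := natCast_mul_le_of_eq_floor_div (hnonneg i) hθ.le (hk i)
  have herr := mul_sub_convergentNum hθ0 hθ1 hq0 hq1 hθrec hqrec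
  refine gaps_eq_of_alternating_errors (m := i) (p := convergentNum k (i + 1))
    (p' := convergentNum k i + t * convergentNum k (i + 1)) hθt hθ ?_ ?_ ?_
  · linear_combination herr (i + 1)
  · push_cast
    linear_combination herr i + (t : ℝ) * herr (i + 1)
  · push_cast
    linear_combination convergentNum_det hq0 hq1 hqrec i

/-- **Two-length configurations.**
Indexing is shifted by one: `θ (m+1)`, `q (m+1)` denote the mathematical `θ_m`, `q_m`
(so `θ 0 = θ₋₁ = 1`, `θ 1 = θ₀ = a`, `q 0 = q₋₁ = 0`, `q 1 = q₀ = 1`), and `k (i+1) = k_{i+1}`.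
For `i ≥ 0` and `0 ≤ t < k_{i+1}`, with `n = q_i + q_{i-1,t}`, the multiset of the `n` gap
lengths consists of `q_i` copies of `θ_{i-1,t}` and `q_{i-1,t}` copies of `θ_i`. -/
theorem two_length_configurations (a : ℝ) (ha0 : 0 < a) (ha1 : a < 1) (hirr : Irrational a)
    (θ : ℕ → ℝ) (q k : ℕ → ℕ)
    (hθ0 : θ 0 = 1) (hθ1 : θ 1 = a)
    (hq0 : q 0 = 0) (hq1 : q 1 = 1)
    (hk : ∀ i, (k (i + 1) : ℤ) = ⌊θ i / θ (i + 1)⌋)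
    (hθrec : ∀ i, θ (i + 2) = θ i - (k (i + 1) : ℝ) * θ (i + 1))
    (hqrec : ∀ i, q (i + 2) = q i + k (i + 1) * q (i + 1))
    (i t : ℕ) (ht : t < k (i + 1)) :
    gaps a (q (i + 1) + (q i + t * q (i + 1))) =
      Multiset.replicate (q (i + 1)) (θ i - (t : ℝ) * θ (i + 1)) +
      Multiset.replicate (q i + t * q (i + 1)) (θ (i + 1)) :=
  two_length_configurations_general a ha0 θ q k hθ0 hθ1 hq0 hq1 hk hθrec hqrec i t ht
end

section
/- Distance update for the subtraction-based step, odd case: let b ∈ [0,1), let i ≥ 0 be odd, let t ≥ 0 with t + 1 < k_{i+1}, and set n = q_i + q_{i−1,t}. Then d_{n+q_i}(b) = d_n(b) if d_n(b) < θ_{i−1,t} − θ_i, and d_{n+q_i}(b) = d_n(b) − (θ_{i−1,t} − θ_i) otherwise. -/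
/-- `dLeft a b n = min { {b - a·x} : 0 ≤ x < n }`, the distance from `b` to the nearest point
of the configuration `{a·x mod 1 : 0 ≤ x < n}` lying to its left (cyclically). -/
noncomputable def dLeft (a b : ℝ) (n : ℕ) : ℝ :=
  sInf {y : ℝ | ∃ x : ℕ, x < n ∧ y = Int.fract (b - a * x)}

/-!
Put `s = t + 1`. Modulo 1, the multiples of `a` by `Q = q_i` and `R = q_{i-1,s} = n` lie at
distance `θ = θ_i` to the left and `τ = θ_{i-1,s} = θ_{i-1,t} - θ_i` to the right of `0`, and the
corresponding lattice vectors form a basis of `ℤ²`. Hence, if `-Q < y - x < Q + R`, then `a y`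
cannot lie to the right of `a x` at a positive distance less than `τ`. So one of the new points
`a y` with `R ≤ y < R + Q` becomes the left neighbour of `b` only if the old left neighbour `a x`
is at distance at least `τ` from `b`. In that case `x < Q`, since otherwise `a (x - Q)`, which
lies `θ ≤ τ` to the right of `a x`, would be closer to `b`; so `a (x + R)` is among the new points,
and no point gets closer, because every new point lies `τ` to the right of an old one.
-/

theorem dLeft_le_fract {a b : ℝ} {n x : ℕ} (hx : x < n) :
    dLeft a b n ≤ Int.fract (b - a * x) := by
  refine csInf_le ⟨0, ?_⟩ ⟨x, hx, rfl⟩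
  rintro _ ⟨z, -, rfl⟩
  exact Int.fract_nonneg _

theorem le_dLeft {a b c : ℝ} {n : ℕ} (hn : 0 < n)
    (h : ∀ x < n, c ≤ Int.fract (b - a * x)) : c ≤ dLeft a b n := by
  refine le_csInf ⟨_, 0, hn, rfl⟩ ?_
  rintro _ ⟨x, hx, rfl⟩
  exact h x hx

theorem exists_dLeft_eq_fract (a b : ℝ) {n : ℕ} (hn : 0 < n) :
    ∃ x < n, dLeft a b n = Int.fract (b - a * x) := by
  have hne : {y : ℝ | ∃ x : ℕ, x < n ∧ y = Int.fract (b - a * x)}.Nonempty := ⟨_, 0, hn, rfl⟩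
  have hfin : {y : ℝ | ∃ x : ℕ, x < n ∧ y = Int.fract (b - a * x)}.Finite :=
    ((Set.finite_lt_nat n).image fun x : ℕ ↦ Int.fract (b - a * x)).subset
      fun _ ⟨x, hx, hy⟩ ↦ ⟨x, hx, hy.symm⟩
  exact hne.csInf_mem hfin

theorem dLeft_le_dLeft {a b : ℝ} {m n : ℕ} (hm : 0 < m) (hmn : m ≤ n) :
    dLeft a b n ≤ dLeft a b m :=
  le_dLeft hm fun _ hx ↦ dLeft_le_fract (hx.trans_le hmn)

section Fract

variable {R : Type*} [CommRing R] [LinearOrder R] [IsStrictOrderedRing R] [FloorRing R]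

theorem fract_sub_le_fract_sub {c : R} (y : R) (hc : 0 ≤ c) :
    Int.fract y - c ≤ Int.fract (y - c) := by
  have hfloor : (⌊y - c⌋ : R) ≤ ⌊y⌋ := by
    exact_mod_cast Int.floor_mono (sub_le_self y hc)
  simp only [Int.fract]
  linarith

theorem fract_sub_eq_fract_sub {y c : R} (hc : 0 ≤ c) (hcy : c ≤ Int.fract y) :
    Int.fract (y - c) = Int.fract y - c := by
  rw [Int.fract_eq_iff]
  refine ⟨sub_nonneg.2 hcy, (sub_le_self _ hc).trans_lt (Int.fract_lt_one y), ⌊y⌋, ?_⟩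
  linear_combination Int.self_sub_fract y

end Fract

/-- Modulo `1`, the point `Q * a` lies at distance `θ` to the left of `0` and `R * a` at distance
`τ` to its right, and the integer vectors `(Q, P)`, `(R, S)` witnessing this form a negatively
oriented basis of `ℤ²`. Two neighbouring (intermediate) convergents of `a` form such a pair. -/
def IsBracketingPair (a θ τ : ℝ) (Q R : ℕ) : Prop :=
  ∃ P S : ℤ, Q * a - P = -θ ∧ R * a - S = τ ∧ P * R - S * Q = 1

namespace IsBracketingPair

variable {a b θ τ : ℝ} {Q R : ℕ}

theorem sub_mul_right (h : IsBracketingPair a θ τ Q R) (s : ℕ) :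
    IsBracketingPair a θ (τ - s * θ) Q (R + s * Q) := by
  obtain ⟨P, S, hQ, hR, hdet⟩ := h
  refine ⟨P, S + s * P, hQ, ?_, ?_⟩ <;> push_cast
  · linear_combination hR + s * hQ
  · linear_combination hdet

theorem sub_mul_left (h : IsBracketingPair a θ τ Q R) (s : ℕ) :
    IsBracketingPair a (θ - s * τ) τ (Q + s * R) R := by
  obtain ⟨P, S, hQ, hR, hdet⟩ := h
  refine ⟨P + s * S, S, ?_, hR, ?_⟩ <;> push_cast
  · linear_combination hQ + s * hR
  · linear_combination hdet

theorem right_pos (h : IsBracketingPair a θ τ Q R) (hQR : Q ≤ R) : 0 < R := by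
  obtain ⟨P, S, -, -, hdet⟩ := h
  by_contra! hR
  obtain rfl : R = 0 := by lia
  obtain rfl : Q = 0 := by lia
  simp at hdet

theorem le_mul_sub_of_pos (h : IsBracketingPair a θ τ Q R) (hθ : 0 ≤ θ) {m l : ℤ}
    (hQm : -(Q : ℤ) < m) (hmQR : m < Q + R) (hpos : 0 < m * a - l) : τ ≤ m * a - l := by
  obtain ⟨P, S, hQ, hR, hdet⟩ := h
  obtain ⟨u, v, hm, hl⟩ : ∃ u v : ℤ, m = u * Q + v * R ∧ l = u * P + v * S :=
    ⟨R * l - S * m, P * m - Q * l, by linear_combination -m * hdet,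
      by linear_combination -l * hdet⟩
  have hcomb : (m : ℝ) * a - l = -u * θ + v * τ := by
    rw [hm, hl]
    push_cast
    linear_combination (u : ℝ) * hQ + (v : ℝ) * hR
  rw [hcomb] at hpos ⊢
  by_contra! hlt
  have hτ : 0 < τ := hpos.trans hlt
  rcases le_or_gt v 0 with hv | hv
  · have hu : u < 0 := by
      by_contra! hu
      have hu' : (0 : ℝ) ≤ u := by exact_mod_cast hu
      have hv' : (v : ℝ) ≤ 0 := by exact_mod_cast hv
      linarith [mul_nonneg hu' hθ, mul_nonpos_of_nonpos_of_nonneg hv' hτ.le]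
    have huQ : u * Q ≤ -1 * Q :=
      mul_le_mul_of_nonneg_right (by lia) (Int.natCast_nonneg Q)
    have hvR : v * R ≤ 0 := mul_nonpos_of_nonpos_of_nonneg hv (Int.natCast_nonneg R)
    lia
  · have hu : 0 < u := by
      by_contra! hu
      have hu' : (u : ℝ) ≤ 0 := by exact_mod_cast hu
      have hv' : (1 : ℝ) ≤ v := by exact_mod_cast hv
      linarith [mul_nonpos_of_nonpos_of_nonneg hu' hθ, le_mul_of_one_le_left hτ.le hv']
    have huQ : (Q : ℤ) ≤ u * Q := le_mul_of_one_le_left (Int.natCast_nonneg Q) hu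
    have hvR : (R : ℤ) ≤ v * R := le_mul_of_one_le_left (Int.natCast_nonneg R) hv
    lia

theorem le_fract_sub_fract (h : IsBracketingPair a θ τ Q R) (hθ : 0 ≤ θ) {x y : ℕ}
    (hxy : x < y + Q) (hyx : y < x + (Q + R))
    (hlt : Int.fract (b - a * y) < Int.fract (b - a * x)) :
    τ ≤ Int.fract (b - a * x) - Int.fract (b - a * y) := by
  have hdiff : Int.fract (b - a * x) - Int.fract (b - a * y) =
      ((y - x : ℤ) : ℝ) * a - ((⌊b - a * x⌋ - ⌊b - a * y⌋ : ℤ) : ℝ) := by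
    simp only [Int.fract]
    push_cast
    ring
  rw [← sub_pos, hdiff] at hlt
  rw [hdiff]
  exact h.le_mul_sub_of_pos hθ (by lia) (by lia) hlt

theorem fract_sub_mul_add_right (h : IsBracketingPair a θ τ Q R) (x : ℕ) :
    Int.fract (b - a * (x + R : ℕ)) = Int.fract (b - a * x - τ) := by
  obtain ⟨-, S, -, hR, -⟩ := h
  refine Int.fract_eq_fract.2 ⟨-S, ?_⟩
  push_cast
  linear_combination -hR

theorem fract_sub_mul_add_left (h : IsBracketingPair a θ τ Q R) (x : ℕ) :
    Int.fract (b - a * (x + Q : ℕ) - θ) = Int.fract (b - a * x) := by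
  obtain ⟨P, -, hQ, -, -⟩ := h
  refine Int.fract_eq_fract.2 ⟨-P, ?_⟩
  push_cast
  linear_combination -hQ

theorem dLeft_add_of_lt (h : IsBracketingPair a θ τ Q R) (hθ : 0 ≤ θ) (hR : 0 < R)
    (hlt : dLeft a b R < τ) : dLeft a b (R + Q) = dLeft a b R := by
  refine le_antisymm (dLeft_le_dLeft hR (Nat.le_add_right R Q))
    (le_dLeft (Nat.add_pos_left hR Q) fun y hy ↦ ?_)
  rcases lt_or_ge y R with hyR | hRy
  · exact dLeft_le_fract hyR
  obtain ⟨x, hx, hdx⟩ := exists_dLeft_eq_fract a b hR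
  by_contra! hyx
  rw [hdx] at hlt hyx
  have hgap := h.le_fract_sub_fract hθ (by lia) (by lia) hyx
  linarith [Int.fract_nonneg (b - a * y)]

theorem index_lt_of_dLeft_eq_fract (h : IsBracketingPair a θ τ Q R) (hθ : 0 < θ) {x : ℕ}
    (hx : x < R) (hdx : dLeft a b R = Int.fract (b - a * x)) (hle : θ ≤ dLeft a b R) :
    x < Q := by
  by_contra! hQx
  obtain ⟨z, rfl⟩ := Nat.exists_eq_add_of_le' hQx
  have hcloser : Int.fract (b - a * z) = dLeft a b R - θ := by
    rw [← h.fract_sub_mul_add_left z, fract_sub_eq_fract_sub hθ.le (hdx ▸ hle), hdx]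
  have hnearest : dLeft a b R ≤ Int.fract (b - a * z) := dLeft_le_fract (by lia)
  linarith

theorem dLeft_add_of_le (h : IsBracketingPair a θ τ Q R) (hθ : 0 < θ) (hθτ : θ ≤ τ)
    (hQR : Q ≤ R) (hle : τ ≤ dLeft a b R) : dLeft a b (R + Q) = dLeft a b R - τ := by
  have hR : 0 < R := h.right_pos hQR
  have hτ : 0 ≤ τ := hθ.le.trans hθτ
  apply le_antisymm
  · obtain ⟨x, hx, hdx⟩ := exists_dLeft_eq_fract a b hR
    have hxQ : x < Q := h.index_lt_of_dLeft_eq_fract hθ hx hdx (hθτ.trans hle)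
    calc dLeft a b (R + Q) ≤ Int.fract (b - a * (x + R : ℕ)) := dLeft_le_fract (by lia)
      _ = Int.fract (b - a * x - τ) := h.fract_sub_mul_add_right x
      _ = dLeft a b R - τ := by rw [fract_sub_eq_fract_sub hτ (hdx ▸ hle), hdx]
  · refine le_dLeft (Nat.add_pos_left hR Q) fun y hy ↦ ?_
    rcases lt_or_ge y R with hyR | hRy
    · exact (sub_le_self _ hτ).trans (dLeft_le_fract hyR)
    obtain ⟨x, rfl⟩ := Nat.exists_eq_add_of_le' hRy
    have hx : dLeft a b R ≤ Int.fract (b - a * x) := dLeft_le_fract (by lia)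
    calc dLeft a b R - τ ≤ Int.fract (b - a * x) - τ := sub_le_sub_right hx τ
      _ ≤ Int.fract (b - a * x - τ) := fract_sub_le_fract_sub _ hτ
      _ = Int.fract (b - a * (x + R : ℕ)) := (h.fract_sub_mul_add_right x).symm

end IsBracketingPair

theorem floor_div_mul_le {K : Type*} [Field K] [LinearOrder K] [IsStrictOrderedRing K]
    [FloorRing K] {x y : K} (hx : 0 ≤ x) (hy : 0 ≤ y) : ⌊x / y⌋ * y ≤ x := by
  rcases hy.eq_or_lt with rfl | hy
  · simpa using hx
  · exact (le_div_iff₀ hy).1 (Int.floor_le _)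

/-- The continued fraction expansion of `a` by the Euclidean algorithm on `1, a`: remainders `θ`,
denominators `q` and digits `k`. Remainders and denominators are indexed from `-1` in the
literature, hence from `0` here: `θ (i + 1)` and `q (i + 1)` stand for `θ_i` and `q_i`, while
`k (i + 1)` stands for `k_{i+1}`. If a remainder vanishes, division by zero makes the digit `0`, so
a positive digit certifies that the algorithm has not stopped yet. -/
structure IsEuclideanExpansion (a : ℝ) (θ : ℕ → ℝ) (q k : ℕ → ℕ) : Prop where
  remainder_zero : θ 0 = 1
  remainder_one : θ 1 = a
  denom_zero : q 0 = 0
  denom_one : q 1 = 1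
  digit (i : ℕ) : (k (i + 1) : ℤ) = ⌊θ i / θ (i + 1)⌋
  remainder_add_two (i : ℕ) : θ (i + 2) = θ i - k (i + 1) * θ (i + 1)
  denom_add_two (i : ℕ) : q (i + 2) = q i + k (i + 1) * q (i + 1)

namespace IsEuclideanExpansion

variable {a : ℝ} {θ : ℕ → ℝ} {q k : ℕ → ℕ}

theorem digit_mul_remainder_le (h : IsEuclideanExpansion a θ q k) {i : ℕ} (hi : 0 ≤ θ i)
    (hi' : 0 ≤ θ (i + 1)) : k (i + 1) * θ (i + 1) ≤ θ i := by
  have hdigit : (k (i + 1) : ℝ) = ⌊θ i / θ (i + 1)⌋ := by exact_mod_cast h.digit i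
  rw [hdigit]
  exact floor_div_mul_le hi hi'

theorem remainder_nonneg (h : IsEuclideanExpansion a θ q k) (ha : 0 ≤ a) (i : ℕ) : 0 ≤ θ i := by
  induction i using Nat.twoStepInduction with
  | zero => simp [h.remainder_zero]
  | one => rwa [h.remainder_one]
  | more i hi hi' =>
    rw [h.remainder_add_two]
    exact sub_nonneg.2 (h.digit_mul_remainder_le hi hi')

theorem remainder_pos_of_digit_pos (h : IsEuclideanExpansion a θ q k) (ha : 0 ≤ a) {i : ℕ}
    (hk : 0 < k (i + 1)) : 0 < θ (i + 1) := by
  refine (h.remainder_nonneg ha (i + 1)).lt_of_ne' fun hzero ↦ ?_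
  have hdigit := h.digit i
  rw [hzero, div_zero, Int.floor_zero] at hdigit
  lia

theorem remainder_le_sub_mul (h : IsEuclideanExpansion a θ q k) (ha : 0 ≤ a) {i s : ℕ}
    (hs : s < k (i + 1)) : θ (i + 1) ≤ θ i - s * θ (i + 1) := by
  have hs' : (s : ℝ) + 1 ≤ k (i + 1) := by exact_mod_cast hs
  linarith [mul_le_mul_of_nonneg_right hs' (h.remainder_nonneg ha (i + 1)),
    h.digit_mul_remainder_le (h.remainder_nonneg ha i) (h.remainder_nonneg ha (i + 1))]

theorem isBracketingPair_of_even (h : IsEuclideanExpansion a θ q k) {i : ℕ} (hi : Even i) :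
    IsBracketingPair a (θ i) (θ (i + 1)) (q i) (q (i + 1)) := by
  obtain ⟨m, rfl⟩ := even_iff_exists_two_mul.1 hi
  clear hi
  induction m with
  | zero =>
    exact ⟨1, 0, by simp [h.denom_zero, h.remainder_zero],
      by simp [h.denom_one, h.remainder_one], by simp [h.denom_one]⟩
  | succ m ih =>
    have hodd := ih.sub_mul_left (k (2 * m + 1))
    rw [← h.remainder_add_two, ← h.denom_add_two] at hodd
    have heven := hodd.sub_mul_right (k (2 * m + 2))
    rwa [← h.remainder_add_two (2 * m + 1), ← h.denom_add_two (2 * m + 1)] at heven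

theorem isBracketingPair_of_odd (h : IsEuclideanExpansion a θ q k) {i : ℕ} (hi : Odd i) :
    IsBracketingPair a (θ (i + 1)) (θ i) (q (i + 1)) (q i) := by
  obtain ⟨m, rfl⟩ := hi
  have hodd := (h.isBracketingPair_of_even (even_two_mul m)).sub_mul_left (k (2 * m + 1))
  rwa [← h.remainder_add_two, ← h.denom_add_two] at hodd

end IsEuclideanExpansion

theorem distance_update_subtractive_odd_general {a : ℝ} {θ : ℕ → ℝ} {q k : ℕ → ℕ}
    (h : IsEuclideanExpansion a θ q k) (ha : 0 < a) (b : ℝ) {i s : ℕ} (hi : Odd i) (hs0 : 0 < s)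
    (hs : s < k (i + 1)) :
    (dLeft a b (q i + s * q (i + 1)) < θ i - s * θ (i + 1) →
      dLeft a b (q i + s * q (i + 1) + q (i + 1)) = dLeft a b (q i + s * q (i + 1))) ∧
    (θ i - s * θ (i + 1) ≤ dLeft a b (q i + s * q (i + 1)) →
      dLeft a b (q i + s * q (i + 1) + q (i + 1)) =
        dLeft a b (q i + s * q (i + 1)) - (θ i - s * θ (i + 1))) := by
  have hpair := (h.isBracketingPair_of_odd hi).sub_mul_right s
  have hθ : 0 < θ (i + 1) := h.remainder_pos_of_digit_pos ha.le (hs0.trans hs)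
  have hθτ : θ (i + 1) ≤ θ i - s * θ (i + 1) := h.remainder_le_sub_mul ha.le hs
  have hQR : q (i + 1) ≤ q i + s * q (i + 1) :=
    (Nat.le_mul_of_pos_left _ hs0).trans (Nat.le_add_left _ _)
  exact ⟨hpair.dLeft_add_of_lt hθ.le (hpair.right_pos hQR), hpair.dLeft_add_of_le hθ hθτ hQR⟩

/-- **Distance update for the subtraction-based step, odd case.**
Indexing is shifted by one: `θ (m+1)`, `q (m+1)` denote the mathematical `θ_m`, `q_m`
(so `θ 0 = θ₋₁ = 1`, `θ 1 = θ₀ = a`, `q 0 = q₋₁ = 0`, `q 1 = q₀ = 1`), and `k (i+1) = k_{i+1}`.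
For `b ∈ [0,1)`, `i` odd, `t + 1 < k_{i+1}` and `n = q_i + q_{i-1,t}`:
`d_{n+q_i}(b) = d_n(b)` if `d_n(b) < θ_{i-1,t} - θ_i`, and
`d_{n+q_i}(b) = d_n(b) - (θ_{i-1,t} - θ_i)` otherwise. -/
theorem distance_update_subtractive_odd (a : ℝ) (ha0 : 0 < a) (ha1 : a < 1)
    (hirr : Irrational a)
    (θ : ℕ → ℝ) (q k : ℕ → ℕ)
    (hθ0 : θ 0 = 1) (hθ1 : θ 1 = a)
    (hq0 : q 0 = 0) (hq1 : q 1 = 1)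
    (hk : ∀ i, (k (i + 1) : ℤ) = ⌊θ i / θ (i + 1)⌋)
    (hθrec : ∀ i, θ (i + 2) = θ i - (k (i + 1) : ℝ) * θ (i + 1))
    (hqrec : ∀ i, q (i + 2) = q i + k (i + 1) * q (i + 1))
    (b : ℝ) (hb0 : 0 ≤ b) (hb1 : b < 1)
    (i : ℕ) (hi : Odd i) (t : ℕ) (ht : t + 1 < k (i + 1))
    (n : ℕ) (hn : n = q (i + 1) + (q i + t * q (i + 1))) :
    (dLeft a b n < θ i - (t : ℝ) * θ (i + 1) - θ (i + 1) →
      dLeft a b (n + q (i + 1)) = dLeft a b n) ∧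
    (θ i - (t : ℝ) * θ (i + 1) - θ (i + 1) ≤ dLeft a b n →
      dLeft a b (n + q (i + 1)) = dLeft a b n - (θ i - (t : ℝ) * θ (i + 1) - θ (i + 1))) := by
  have hτ : θ i - t * θ (i + 1) - θ (i + 1) = θ i - (t + 1 : ℕ) * θ (i + 1) := by
    push_cast
    ring
  have hR : n = q i + (t + 1) * q (i + 1) := by rw [hn]; ring
  rw [hτ, hR]
  exact distance_update_subtractive_odd_general ⟨hθ0, hθ1, hq0, hq1, hk, hθrec, hqrec⟩ ha0 b hi
    t.succ_pos ht
end
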